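/- (Theorem 1, part (iii)) Suppose (g_n^*) is an optimal configuration with overall channel h^* ≠ 0, and let n be an element with v_n ≠ 0. If i is an index such that ang(h^*, F_{n,i}) ≤ ang(h^*, F_{n,l}) for every l ∈ {1,…,K} and ang(h^*, F_{n,i}) > π/2, then g_n^* = 0, i.e., element n is turned off in the optimal configuration. -/

import Mathlib

/-- The angle in `[0,π]` between two nonzero complex numbers regarded as plane vectors:
`ang a b = arccos (Re (a * conj b) / (|a| * |b|))`. -/
noncomputable def ang (a b : ℂ) : ℝ :=
  Real.arccos ((a * (starRingEnd ℂ) b).re / (‖a‖ * ‖b‖))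

/-!
Switching element `n` off replaces the overall channel `h` by `h - g n`. If `g n` makes an obtuse
angle with `h`, then `‖h - g n‖ ^ 2 = ‖h‖ ^ 2 - 2 ⟪h, g n⟫ + ‖g n‖ ^ 2 > ‖h‖ ^ 2`, so an optimal
configuration never keeps such an element on.
-/

open InnerProductGeometry

theorem ang_eq_angle (a b : ℂ) : ang a b = angle a b := by
  rw [ang, angle, real_inner_comm, Complex.inner, mul_comm]

section InnerProductSpace

variable {V : Type*} [NormedAddCommGroup V] [InnerProductSpace ℝ V]

theorem inner_neg_of_pi_div_two_lt_angle {x y : V} (hxy : Real.pi / 2 < angle x y) :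
    inner ℝ x y < 0 := by
  contrapose! hxy
  exact Real.arccos_le_pi_div_two.2 (by positivity)

theorem norm_lt_norm_sub_of_pi_div_two_lt_angle {x y : V} (hxy : Real.pi / 2 < angle x y) :
    ‖x‖ < ‖x - y‖ := by
  have hinner := inner_neg_of_pi_div_two_lt_angle hxy
  refine lt_of_pow_lt_pow_left₀ 2 (norm_nonneg _) ?_
  calc ‖x‖ ^ 2 < ‖x‖ ^ 2 - 2 * inner ℝ x y + ‖y‖ ^ 2 := by linarith [sq_nonneg ‖y‖]
    _ = ‖x - y‖ ^ 2 := (norm_sub_sq_real x y).symm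

end InnerProductSpace

theorem sum_update_zero_eq_sum_sub {ι M : Type*} [Fintype ι] [DecidableEq ι] [AddCommGroup M]
    (g : ι → M) (n : ι) : ∑ m, Function.update g n 0 m = ∑ m, g m - g n := by
  rw [Finset.sum_update_of_mem (Finset.mem_univ n), zero_add,
    Finset.sum_sdiff_eq_sub (Finset.subset_univ _), Finset.sum_singleton]

theorem stmt_8_general {ι κ V : Type*} [Fintype ι] [NormedAddCommGroup V] [InnerProductSpace ℝ V]
    (h_d : V) (F : ι → κ → V) (g : ι → V)
    (hg : ∀ m, g m = 0 ∨ ∃ i, g m = F m i)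
    (hopt : ∀ g' : ι → V, (∀ m, g' m = 0 ∨ ∃ i, g' m = F m i) →
      ‖h_d + ∑ m, g' m‖ ≤ ‖h_d + ∑ m, g m‖)
    (n : ι) (hang : ∀ l, Real.pi / 2 < angle (h_d + ∑ m, g m) (F n l)) :
    g n = 0 := by
  classical
  refine (hg n).resolve_right fun ⟨l, hl⟩ => ?_
  have hgrow : ‖h_d + ∑ m, g m‖ < ‖h_d + ∑ m, g m - g n‖ :=
    norm_lt_norm_sub_of_pi_div_two_lt_angle (hl ▸ hang l)
  have hswitch_off : ‖h_d + ∑ m, Function.update g n 0 m‖ ≤ ‖h_d + ∑ m, g m‖ :=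
    hopt _ <| (Function.forall_update_iff g fun m x => x = 0 ∨ ∃ i, x = F m i).2
      ⟨.inl rfl, fun m _ => hg m⟩
  rw [sum_update_zero_eq_sum_sub, ← add_sub_assoc] at hswitch_off
  exact hgrow.not_ge hswitch_off

/-- Theorem 1 part (iii): if `F n i` has the smallest angle with `h^*` and that angle
is `> π/2`, then element `n` is turned off in the optimal configuration. -/
theorem stmt_8
    {N K : ℕ} (hN : 0 < N) (hK : 0 < K)
    (h_d : ℂ) (v : Fin N → ℂ) (φ : Fin K → ℝ)
    (hφinj : Function.Injective φ)
    (hφrange : ∀ i, 0 ≤ φ i ∧ φ i < 2 * Real.pi)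
    (F : Fin N → Fin K → ℂ)
    (hF : ∀ m i, F m i = v m * Complex.exp ((φ i : ℂ) * Complex.I))
    (g : Fin N → ℂ)
    (hg : ∀ m, g m = 0 ∨ ∃ i, g m = F m i)
    (hopt : ∀ g' : Fin N → ℂ, (∀ m, g' m = 0 ∨ ∃ i, g' m = F m i) →
      ‖h_d + ∑ m, g' m‖ ≤ ‖h_d + ∑ m, g m‖)
    (hstar : h_d + ∑ m, g m ≠ 0)
    (n : Fin N) (hvn : v n ≠ 0)
    (i : Fin K)
    (hmin : ∀ l, ang (h_d + ∑ m, g m) (F n i) ≤ ang (h_d + ∑ m, g m) (F n l))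
    (hang : Real.pi / 2 < ang (h_d + ∑ m, g m) (F n i)) :
    g n = 0 := by
  simp only [ang_eq_angle] at hmin hang
  exact stmt_8_general h_d F g hg hopt n fun l => hang.trans_le (hmin l)
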